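/- If (G, 𝓐) is a local convergence pairing on a Peano continuum X without cut points, then for each A ∈ 𝓐 the stabilizer st(A) = {g ∈ G : g(A) = A} acts as a convergence group on X. -/

import Mathlib

/-!
The sequences of group elements are replaced by nonprincipal ultrafilters `𝒰` on `G`. By nullity
and compactness, every `B ∈ 𝓐` behaves along `𝒰` in one of two ways (`exists_isAttractor`): its
translates shrink to a point `p`, or they are eventually a constant set `B'` and the maps
`g : B → B'` converge to a point `p ∈ B'` away from a repeller `n ∈ B`, since translating `𝒰` back
to the stabilizer of `B` makes the convergence property on `B` available.

The central fact is that the attractor `p` is the same for all members of `𝓐`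
(`IsAttractor.eq`). It suffices to compare crossing sets `B` and `C`. If `B` shrinks to `p`, or
converges to `p` with repeller outside `C`, then by local connectedness the translates of `C`
accumulate at `p`. This settles the case where `B` and `C` both shrink, and the case where `C`
shrinks and the repeller of `B` is not in `C`. In the other cases, if no point of `B ∩ C` other
than the repellers decides, condition (5) gives a crossing sequence from `B` to `C` avoiding the
repeller of `B` and the point carried onto `p`. None of its intermediate terms can have constant
translates, for the limit would contain `p`; so they all shrink to `p`
(`ConvTo.shrinksTo_of_crossing`), and the last of them is compared with `C`.

Applied to `𝒰` and to its image under inversion, this shows that all members of `𝓐` have attractor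
`p` and, pulled back, are attracted to `n`, where `n` and `p` belong to `A`. Suppose points
`ξ g → x ≠ n` satisfy `g • ξ g → y ≠ p`. Fineness gives finitely many members of `𝓐` separating `y`
from `p`; they miss `p`, so they are pulled back into any neighbourhood of `n`. As `n` is not a cut
point, a connected set away from `n` joins a neighbourhood of `x` to a point of `A` carried to `p`;
its translates join the components of `y` and `p`, a contradiction (`conv_univ_of_convTo`).
-/

open Set Filter Topology Pointwise

/-- The set `E` separates the points `x` and `y`: both lie outside `E` and in
different connected components of the complement of `E`. -/
def SepPts {X : Type*} [TopologicalSpace X] (E : Set X) (x y : X) : Prop :=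
  x ∉ E ∧ y ∉ E ∧ connectedComponentIn Eᶜ x ≠ connectedComponentIn Eᶜ y

/-- The set `E` separates the set `Y ⊆ X \ E`: two points of `Y` lie in different
connected components of the complement of `E`. -/
def SepSet {X : Type*} [TopologicalSpace X] (E Y : Set X) : Prop :=
  Y ⊆ Eᶜ ∧ ∃ x ∈ Y, ∃ y ∈ Y, connectedComponentIn Eᶜ x ≠ connectedComponentIn Eᶜ y

/-- Two (closed) sets `A` and `B` cross: they intersect, or each separates the other. -/
def Crosses {X : Type*} [TopologicalSpace X] (A B : Set X) : Prop :=
  (A ∩ B).Nonempty ∨ (SepSet A B ∧ SepSet B A)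

/-- There is a (finite) crossing sequence in `𝓐` from `A` to `B`. -/
def CrossSeqFromTo {X : Type*} [TopologicalSpace X] (𝓐 : Set (Set X)) (A B : Set X) : Prop :=
  ∃ (n : ℕ) (c : ℕ → Set X), c 0 = A ∧ c n = B ∧ (∀ i ≤ n, c i ∈ 𝓐) ∧
    ∀ i < n, Crosses (c i) (c (i + 1))

/-- A collection `𝓐` is cross-connected: any two of its elements are joined by a
crossing sequence in `𝓐`. -/
def CrossConnected {X : Type*} [TopologicalSpace X] (𝓐 : Set (Set X)) : Prop :=
  ∀ A ∈ 𝓐, ∀ B ∈ 𝓐, CrossSeqFromTo 𝓐 A B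

/-- There is a crossing sequence `A, A_1, …, A_n, B` in `𝓐` (with `n ≥ 1`) whose
intermediate terms `A_1, …, A_n` are disjoint from `D`. -/
def CrossSeqAvoiding {X : Type*} [TopologicalSpace X] (𝓐 : Set (Set X)) (A B D : Set X) :
    Prop :=
  ∃ n : ℕ, 1 ≤ n ∧ ∃ c : ℕ → Set X, c 0 = A ∧ c (n + 1) = B ∧ (∀ i ≤ n + 1, c i ∈ 𝓐) ∧
    (∀ i ≤ n, Crosses (c i) (c (i + 1))) ∧ ∀ i, 1 ≤ i → i ≤ n → c i ∩ D = ∅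

/-- A collection of subsets of a metric space is null if for every `ε > 0` only finitely
many of its members have diameter greater than `ε`. -/
def NullFam {X : Type*} [PseudoMetricSpace X] (𝓐 : Set (Set X)) : Prop :=
  ∀ ε : ℝ, 0 < ε → {A ∈ 𝓐 | ε < Metric.diam A}.Finite

/-- A collection `𝓐` is fine if any two distinct points are separated by the union of
some finite subcollection of `𝓐`. -/
def FineFam {X : Type*} [PseudoMetricSpace X] (𝓐 : Set (Set X)) : Prop :=
  ∀ x y : X, x ≠ y → ∃ 𝓑 ⊆ 𝓐, 𝓑.Finite ∧ SepPts (⋃₀ 𝓑) x y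

/-- A sequence of maps `T i : X → X` acts as a convergence sequence on the subset `A`,
with repeller `n ∈ A` and attractor `p ∈ A`: for every compact `C ⊆ A \ {n}` and every
open neighborhood `U` of `p`, eventually `T i '' C ⊆ U`. -/
def ConvSeqOn {X : Type*} [TopologicalSpace X] (A : Set X) (T : ℕ → X → X) (n p : X) :
    Prop :=
  n ∈ A ∧ p ∈ A ∧ ∀ C : Set X, C ⊆ A → IsCompact C → n ∉ C →
    ∀ U : Set X, IsOpen U → p ∈ U → ∀ᶠ i in atTop, T i '' C ⊆ U

/-- The stabilizer of a subset `A ⊆ X` in `G`. -/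
def stab (G : Type*) {X : Type*} [Group G] [MulAction G X] (A : Set X) : Set G :=
  {g : G | g • A = A}

/-- The subset `S` of the group `G` acts as a convergence group on `A ⊆ X`: every
sequence of distinct elements of `S` has a subsequence acting as a convergence
sequence on `A`. -/
def ConvGroupOn {G X : Type*} [Group G] [MulAction G X] [TopologicalSpace X]
    (S : Set G) (A : Set X) : Prop :=
  ∀ g : ℕ → G, (∀ i, g i ∈ S) → Function.Injective g →
    ∃ k : ℕ → ℕ, StrictMono k ∧ ∃ n p : X,
      ConvSeqOn A (fun i => (g (k i) • · : X → X)) n p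

/-- `(G, 𝓐)` is a local convergence pairing on `X`. -/
structure IsLocalConvPairing (G : Type*) {X : Type*} [Group G] [MulAction G X]
    [MetricSpace X] (𝓐 : Set (Set X)) : Prop where
  closed : ∀ A ∈ 𝓐, IsClosed A
  invariant : ∀ g : G, ∀ A ∈ 𝓐, g • A ∈ 𝓐
  big : ∀ A ∈ 𝓐, 2 < A.encard
  null : NullFam 𝓐
  fine : FineFam 𝓐
  stabConv : ∀ A ∈ 𝓐, ConvGroupOn (stab G A) A
  connect : ∀ A ∈ 𝓐, ∀ B ∈ 𝓐, (A ∩ B).encard ≤ 2 →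
    (∀ c : X, A ∩ B = {c} → ∀ b ∈ B, b ≠ c → CrossSeqAvoiding 𝓐 A B {b, c}) ∧
    ((¬ ∃ c : X, A ∩ B = {c}) → CrossSeqAvoiding 𝓐 A B (A ∩ B))

section Helpers

variable {G X : Type*} [Group G] [MulAction G X]

/-- `B` is shrunk to the point `p` along the ultrafilter `𝒰` on `G`. -/
def ShrinksTo [TopologicalSpace X] (𝒰 : Ultrafilter G) (B : Set X) (p : X) : Prop :=
  ∀ V ∈ 𝓝 p, ∀ᶠ g : G in 𝒰, g • B ⊆ V

/-- Along `𝒰` the translate `g • B` is the constant set `B'`, and the maps `g : B → B'`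
converge to `p ∈ B'` locally uniformly away from `n ∈ B`. -/
structure ConvTo [TopologicalSpace X] (𝒰 : Ultrafilter G) (B B' : Set X) (n p : X) : Prop where
  image_eq : ∀ᶠ g : G in 𝒰, g • B = B'
  rep_mem : n ∈ B
  att_mem : p ∈ B'
  conv : ∀ W ∈ 𝓝 n, ∀ U ∈ 𝓝 p, ∀ᶠ g : G in 𝒰, ∀ x ∈ B, x ∉ W → g • x ∈ U

/-- `p` is the attractor of `B` along `𝒰`, in either of the two ways in which a member of a
local convergence pairing can behave. -/
def IsAttractor [TopologicalSpace X] (𝒰 : Ultrafilter G) (B : Set X) (p : X) : Prop :=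
  ShrinksTo 𝒰 B p ∨ ∃ D n, ConvTo 𝒰 B D n p

/-! ### Ultrafilter limits -/

theorem exists_mem_ne_ne_of_two_lt {α : Type*} {s : Set α} (hs : 2 < s.encard) (a b : α) :
    ∃ x ∈ s, x ≠ a ∧ x ≠ b := by
  by_contra! H
  have hsub : s ⊆ {a, b} := by
    intro x hx
    by_cases hxa : x = a
    · exact Or.inl hxa
    · exact Or.inr (H x hx hxa)
  exact absurd (hs.trans_le ((encard_le_encard hsub).trans ((encard_insert_le {b} a).trans
    (by rw [encard_singleton, one_add_one_eq_two])))) (lt_irrefl _)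

/-- The sequential convergence group property gives convergence along every nonprincipal
ultrafilter. Otherwise each `(n, p) ∈ B × B` has a neighbourhood `N` and a member `T` of `𝒰`
such that no sequence in `T` converges with repeller and attractor in `N`; by compactness one `T`
serves all of `B × B`, and so contains no convergence sequence at all. -/
theorem exists_conv_of_convGroupOn [TopologicalSpace X] {S : Set G} {B : Set X}
    (hB : IsCompact B) (hS : ConvGroupOn S B) (𝒰 : Ultrafilter G)
    (hU : (𝒰 : Filter G) ≤ cofinite) (hmem : ∀ᶠ g : G in 𝒰, g ∈ S) :
    ∃ n ∈ B, ∃ p ∈ B, ∀ W ∈ 𝓝 n, ∀ U ∈ 𝓝 p, ∀ᶠ g : G in 𝒰, ∀ x ∈ B, x ∉ W → g • x ∈ U := by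
  by_contra H
  have key : ∃ T ∈ 𝒰, ∀ q ∈ B ×ˢ B, ∀ k : ℕ → G, (∀ i, k i ∈ T) →
      ¬ ConvSeqOn B (fun i => (k i • · : X → X)) q.1 q.2 := by
    refine IsCompact.induction_on (hB.prod hB)
      (p := fun s => ∃ T ∈ 𝒰, ∀ q ∈ s, ∀ k : ℕ → G, (∀ i, k i ∈ T) →
        ¬ ConvSeqOn B (fun i => (k i • · : X → X)) q.1 q.2) ?_ ?_ ?_ ?_
    · exact ⟨univ, Filter.univ_mem, by simp⟩
    · rintro s t hst ⟨T, hT, h⟩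
      exact ⟨T, hT, fun q hq => h q (hst hq)⟩
    · rintro s t ⟨T, hT, h⟩ ⟨T', hT', h'⟩
      refine ⟨T ∩ T', inter_mem hT hT', ?_⟩
      rintro q (hq | hq) k hk
      · exact h q hq k fun i => (hk i).1
      · exact h' q hq k fun i => (hk i).2
    · rintro ⟨n, p⟩ ⟨hn, hp⟩
      obtain ⟨W, hW, U, hU', hWU⟩ : ∃ W ∈ 𝓝 n, ∃ U ∈ 𝓝 p,
          ¬ ∀ᶠ g : G in 𝒰, ∀ x ∈ B, x ∉ W → g • x ∈ U := by
        by_contra hno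
        refine H ⟨n, hn, p, hp, fun W hW U hU' => ?_⟩
        by_contra hWU
        exact hno ⟨W, hW, U, hU', hWU⟩
      obtain ⟨W', hW'W, hW'o, hnW'⟩ := mem_nhds_iff.1 hW
      obtain ⟨U', hU'U, hU'o, hpU'⟩ := mem_nhds_iff.1 hU'
      refine ⟨W' ×ˢ U', mem_nhdsWithin_of_mem_nhds
        (prod_mem_nhds (hW'o.mem_nhds hnW') (hU'o.mem_nhds hpU')),
        {g | ¬ ∀ x ∈ B, x ∉ W → g • x ∈ U}, ?_, ?_⟩
      · exact (Ultrafilter.eventually_not (f := 𝒰)).2 hWU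
      · rintro ⟨n', p'⟩ ⟨hn', hp'⟩ k hk ⟨_, _, hc⟩
        obtain ⟨i, hi⟩ := (hc (B \ W') sdiff_subset (hB.diff hW'o) (fun hh => hh.2 hn')
          U' hU'o hp').exists
        exact hk i fun x hx hxW => hU'U (hi ⟨x, ⟨hx, fun hh => hxW (hW'W hh)⟩, rfl⟩)
  obtain ⟨T, hT, hTk⟩ := key
  have hinf : (T ∩ {g | g ∈ S}).Infinite := by
    intro hfin
    have h1 : (T ∩ {g | g ∈ S})ᶜ ∈ (𝒰 : Filter G) := hU hfin.compl_mem_cofinite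
    have h2 : T ∩ {g | g ∈ S} ∈ (𝒰 : Filter G) := inter_mem hT hmem
    exact (Ultrafilter.compl_mem_iff_notMem.1 h1) h2
  let e := hinf.natEmbedding
  obtain ⟨k, hk, n, p, hnp⟩ := hS (fun i => (e i : G)) (fun i => (e i).2.2)
    (fun i j hij => e.injective (Subtype.ext hij))
  exact hTk (n, p) ⟨hnp.1, hnp.2.1⟩ (fun i => (e (k i) : G)) (fun i => (e (k i)).2.1) hnp

section Dynamics

variable [MetricSpace X] {𝒰 : Ultrafilter G} {𝓐 : Set (Set X)} {B B' C C' F : Set X} {n p q : X}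

theorem ConvTo.inv (f : ConvTo 𝒰 B B' n p) : ConvTo (𝒰.map (·⁻¹)) B' B p n where
  image_eq := by
    rw [Ultrafilter.coe_map, eventually_map]
    filter_upwards [f.image_eq] with g hg
    rw [← hg, inv_smul_smul]
  rep_mem := f.att_mem
  att_mem := f.rep_mem
  conv := by
    intro W hW U hU
    rw [Ultrafilter.coe_map, eventually_map]
    filter_upwards [f.image_eq, f.conv U hU W hW] with g hg hc x hx hxW
    by_contra hxU
    have hx' : g⁻¹ • x ∈ B := by rwa [← mem_smul_set_iff_inv_smul_mem, hg]
    exact hxW (by simpa using hc _ hx' hxU)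

theorem map_inv_map_inv (𝒰 : Ultrafilter G) : (𝒰.map (·⁻¹)).map (·⁻¹) = 𝒰 := by
  rw [Ultrafilter.map_map]
  have : ((·⁻¹) ∘ (·⁻¹) : G → G) = id := by ext; simp
  rw [this, Ultrafilter.map_id]

theorem map_inv_le_cofinite (hU : (𝒰 : Filter G) ≤ cofinite) :
    ((𝒰.map (·⁻¹) : Ultrafilter G) : Filter G) ≤ cofinite :=
  (map_mono hU).trans inv_injective.tendsto_cofinite

theorem ConvTo.tendsto (f : ConvTo 𝒰 B B' n p) {x : X} (hx : x ∈ B) (hxn : x ≠ n) :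
    Tendsto (fun g : G => g • x) 𝒰 (𝓝 p) := by
  intro U hU
  rw [mem_map]
  filter_upwards [f.conv {x}ᶜ (isOpen_compl_singleton.mem_nhds hxn.symm) U hU] with g hg
  exact hg x hx (by simp)

theorem ShrinksTo.tendsto (f : ShrinksTo 𝒰 B p) {x : X} (hx : x ∈ B) :
    Tendsto (fun g : G => g • x) 𝒰 (𝓝 p) := by
  intro U hU
  rw [mem_map]
  filter_upwards [f U hU] with g hg
  exact hg (smul_mem_smul_set hx)

theorem ConvTo.image_mem (h : IsLocalConvPairing G 𝓐) (hB : B ∈ 𝓐) (f : ConvTo 𝒰 B B' n p) :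
    B' ∈ 𝓐 := by
  obtain ⟨g, hg⟩ := f.image_eq.exists
  exact hg ▸ h.invariant g B hB

/-- By nullity, a member of `𝓐` whose translates are not constant along `𝒰` is shrunk to a
point; if they are constant, a translate of `𝒰` lives on the stabilizer. -/
theorem exists_isAttractor [CompactSpace X] [ContinuousConstSMul G X]
    (h : IsLocalConvPairing G 𝓐) (hU : (𝒰 : Filter G) ≤ cofinite) (hB : B ∈ 𝓐) :
    ∃ p, IsAttractor 𝒰 B p := by
  by_cases hcon : ∃ B', ∀ᶠ g : G in 𝒰, g • B = B'
  · obtain ⟨B', hB'⟩ := hcon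
    obtain ⟨g₀, hg₀⟩ := hB'.exists
    have hle : ((𝒰.map (g₀⁻¹ * ·) : Ultrafilter G) : Filter G) ≤ cofinite :=
      (map_mono hU).trans (mul_right_injective g₀⁻¹).tendsto_cofinite
    obtain ⟨n, hn, p, hp, hc⟩ := exists_conv_of_convGroupOn (h.closed B hB).isCompact
      (h.stabConv B hB) (𝒰.map (g₀⁻¹ * ·)) hle (by
        rw [Ultrafilter.coe_map, eventually_map]
        filter_upwards [hB'] with g hg
        change (g₀⁻¹ * g) • B = B
        rw [mul_smul, hg, ← hg₀, inv_smul_smul])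
    refine ⟨g₀ • p, Or.inr ⟨B', n, hB', hn, hg₀ ▸ smul_mem_smul_set hp, ?_⟩⟩
    intro W hW U hU
    have hpre : (fun x : X => g₀ • x) ⁻¹' U ∈ 𝓝 p :=
      (continuous_const_smul g₀).continuousAt.preimage_mem_nhds hU
    have := hc W hW _ hpre
    rw [Ultrafilter.coe_map, eventually_map] at this
    filter_upwards [this] with g hg x hx hxW
    simpa [mul_smul] using hg x hx hxW
  · have hdiam : ∀ ε : ℝ, 0 < ε → ∀ᶠ g : G in 𝒰, Metric.diam (g • B) ≤ ε := by
      intro ε hε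
      by_contra hne
      have h1 : ∀ᶠ g : G in 𝒰, ¬ Metric.diam (g • B) ≤ ε := Ultrafilter.eventually_not.2 hne
      have h2 : (⋃ D ∈ {D ∈ 𝓐 | ε < Metric.diam D}, {g : G | g • B = D}) ∈ 𝒰 := by
        filter_upwards [h1] with g hg
        simp only [mem_iUnion]
        exact ⟨g • B, ⟨h.invariant g B hB, not_le.1 hg⟩, rfl⟩
      obtain ⟨D, -, hD⟩ := (Ultrafilter.finite_biUnion_mem_iff (h.null ε hε)).1 h2
      exact hcon ⟨D, hD⟩
    have hne : B.Nonempty := encard_pos.1 (lt_trans (by norm_num) (h.big B hB))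
    obtain ⟨b, hb⟩ := hne
    obtain ⟨q, -, hq⟩ := isCompact_univ.ultrafilter_le_nhds (𝒰.map fun g : G => g • b) (by simp)
    refine ⟨q, Or.inl fun V hV => ?_⟩
    obtain ⟨ε, hε, hεV⟩ := Metric.mem_nhds_iff.1 hV
    have hball : ∀ᶠ g : G in 𝒰, g • b ∈ Metric.ball q (ε / 2) :=
      hq (Metric.ball_mem_nhds q (half_pos hε))
    filter_upwards [hball, hdiam (ε / 2) (half_pos hε)] with g hgb hgd y hy
    apply hεV
    have h1 : dist y (g • b) ≤ Metric.diam (g • B) :=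
      Metric.dist_le_diam_of_mem (isCompact_univ.isBounded.subset (subset_univ _)) hy (smul_mem_smul_set hb)
    have h2 := Metric.mem_ball.1 hgb
    have h3 := dist_triangle y (g • b) q
    exact Metric.mem_ball.2 (by linarith)

/-! ### Crossing sets -/

/-- The translate of a preconnected `V` by `g⁻¹` cannot join two components of `Cᶜ`
without meeting `C`. -/
theorem smul_inter_nonempty_of_sep [ContinuousConstSMul G X] {V : Set X}
    (hV : IsPreconnected V) {x y : X}
    (hxy : connectedComponentIn Cᶜ x ≠ connectedComponentIn Cᶜ y) {g : G}
    (hx : g • x ∈ V) (hy : g • y ∈ V) : (g • C ∩ V).Nonempty := by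
  by_contra hemp
  apply hxy
  have hpre : IsPreconnected (g⁻¹ • V) := by
    rw [← image_smul]
    exact hV.image _ (continuous_const_smul g⁻¹).continuousOn
  have hsub : g⁻¹ • V ⊆ Cᶜ := by
    intro z hz hzC
    rw [mem_smul_set_iff_inv_smul_mem, inv_inv] at hz
    exact hemp ⟨g • z, smul_mem_smul_set hzC, hz⟩
  have hx' : x ∈ g⁻¹ • V := by rwa [mem_smul_set_iff_inv_smul_mem, inv_inv]
  have hy' : y ∈ g⁻¹ • V := by rwa [mem_smul_set_iff_inv_smul_mem, inv_inv]
  exact connectedComponentIn_eq (hpre.subset_connectedComponentIn hx' hsub hy')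

theorem Crosses.symm (hc : Crosses B C) : Crosses C B := by
  rcases hc with hc | ⟨h1, h2⟩
  · exact Or.inl (inter_comm B C ▸ hc)
  · exact Or.inr ⟨h2, h1⟩

/-- If `B` crosses `C` and enough of `B` is carried to `p` along `𝒰`, then the translates of `C`
accumulate at `p`: either a common point is carried to `p`, or two points of different components
of `Cᶜ` are, and `g • C` then meets every connected neighbourhood of `p`. -/
theorem Crosses.eventually_meets_aux [LocallyConnectedSpace X] [ContinuousConstSMul G X]
    (hc : Crosses B C) (hinter : ∀ x ∈ B ∩ C, Tendsto (fun g : G => g • x) 𝒰 (𝓝 p))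
    (hsep : SepSet C B → ∃ x y, connectedComponentIn Cᶜ x ≠ connectedComponentIn Cᶜ y ∧
      Tendsto (fun g : G => g • x) 𝒰 (𝓝 p) ∧ Tendsto (fun g : G => g • y) 𝒰 (𝓝 p))
    {V : Set X} (hV : V ∈ 𝓝 p) : ∀ᶠ g : G in 𝒰, (g • C ∩ V).Nonempty := by
  rcases hc with ⟨x, hx⟩ | ⟨-, hs⟩
  · filter_upwards [hinter x hx hV] with g hg
    exact ⟨g • x, smul_mem_smul_set hx.2, hg⟩
  · obtain ⟨x, y, hxy, hx, hy⟩ := hsep hs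
    obtain ⟨V', hV'V, hV'o, hpV', hV'c⟩ :=
      locallyConnectedSpace_iff_subsets_isOpen_isConnected.1 ‹_› p V hV
    filter_upwards [hx (hV'o.mem_nhds hpV'), hy (hV'o.mem_nhds hpV')] with g hgx hgy
    exact (smul_inter_nonempty_of_sep hV'c.isPreconnected hxy hgx hgy).mono
      (inter_subset_inter_right _ hV'V)

theorem ShrinksTo.eventually_meets [LocallyConnectedSpace X] [ContinuousConstSMul G X]
    (f : ShrinksTo 𝒰 B p) (hc : Crosses B C) {V : Set X} (hV : V ∈ 𝓝 p) :
    ∀ᶠ g : G in 𝒰, (g • C ∩ V).Nonempty := by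
  refine hc.eventually_meets_aux (fun x hx => f.tendsto hx.1) ?_ hV
  rintro ⟨-, x, hx, y, hy, hxy⟩
  exact ⟨x, y, hxy, f.tendsto hx, f.tendsto hy⟩

/-- The repeller is not isolated in `B`: two points of `B'` other than the attractor are pulled
back to distinct points near `n`. -/
theorem ConvTo.exists_near_rep (h : IsLocalConvPairing G 𝓐) (hB : B ∈ 𝓐)
    (f : ConvTo 𝒰 B B' n p) {W : Set X} (hW : W ∈ 𝓝 n) : ∃ y ∈ B, y ∈ W ∧ y ≠ n := by
  have hbig := h.big B' (f.image_mem h hB)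
  obtain ⟨u, hu, hup, -⟩ := exists_mem_ne_ne_of_two_lt hbig p p
  obtain ⟨v, hv, hvp, hvu⟩ := exists_mem_ne_ne_of_two_lt hbig p u
  obtain ⟨g, ⟨hg, hgu⟩, hgv⟩ := ((f.inv.image_eq.and (f.inv.tendsto hu hup hW)).and
    (f.inv.tendsto hv hvp hW)).exists
  by_cases hne : g • u = n
  · refine ⟨g • v, hg ▸ smul_mem_smul_set hv, hgv, fun hh => hvu ?_⟩
    exact smul_left_cancel g (hh.trans hne.symm)
  · exact ⟨g • u, hg ▸ smul_mem_smul_set hu, hgu, hne⟩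

theorem ConvTo.eventually_meets [LocallyConnectedSpace X] [ContinuousConstSMul G X]
    (h : IsLocalConvPairing G 𝓐) (hB : B ∈ 𝓐) (hC : C ∈ 𝓐)
    (f : ConvTo 𝒰 B B' n p) (hc : Crosses B C) (hn : n ∉ C) {V : Set X} (hV : V ∈ 𝓝 p) :
    ∀ᶠ g : G in 𝒰, (g • C ∩ V).Nonempty := by
  refine hc.eventually_meets_aux
    (fun x hx => f.tendsto hx.1 fun hh => hn (hh ▸ hx.2)) ?_ hV
  rintro ⟨-, x, hx, y, hy, hxy⟩
  -- the component of `n` is a neighbourhood of `n`, so it contains another point of `B`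
  have hopen : IsOpen (connectedComponentIn Cᶜ n) := (h.closed C hC).isOpen_compl.connectedComponentIn
  obtain ⟨z, hzB, hz, hzn⟩ := f.exists_near_rep h hB
    (hopen.mem_nhds (mem_connectedComponentIn (F := Cᶜ) hn))
  have hz' := connectedComponentIn_eq hz
  have hex : ∃ w ∈ B, connectedComponentIn Cᶜ w ≠ connectedComponentIn Cᶜ n := by
    by_contra! hall
    exact hxy ((hall x hx).trans (hall y hy).symm)
  obtain ⟨w, hwB, hw⟩ := hex
  exact ⟨w, z, hz' ▸ hw, f.tendsto hwB fun hh => hw (hh ▸ rfl), f.tendsto hzB hzn⟩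

theorem ShrinksTo.eq_of_meets (f : ShrinksTo 𝒰 C q)
    (hm : ∀ V ∈ 𝓝 p, ∀ᶠ g : G in 𝒰, (g • C ∩ V).Nonempty) : q = p := by
  by_contra hne
  obtain ⟨U, V, hU, hV, hqU, hpV, hd⟩ := t2_separation hne
  obtain ⟨g, hg, x, hx, hxV⟩ := ((f U (hU.mem_nhds hqU)).and (hm V (hV.mem_nhds hpV))).exists
  exact disjoint_left.1 hd (hg hx) hxV

theorem ConvTo.mem_of_meets (h : IsLocalConvPairing G 𝓐) (hC : C ∈ 𝓐) {m r : X}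
    (f : ConvTo 𝒰 C C' m r)
    (hm : ∀ V ∈ 𝓝 p, ∀ᶠ g : G in 𝒰, (g • C ∩ V).Nonempty) : p ∈ C' := by
  by_contra hne
  have hcl := h.closed C' (f.image_mem h hC)
  obtain ⟨g, hg, x, hx, hxV⟩ :=
    (f.image_eq.and (hm _ (hcl.isOpen_compl.mem_nhds hne))).exists
  exact hxV (hg ▸ hx)

/-! ### Members with constant translates -/

theorem ConvTo.att_mem_of_inter (h : IsLocalConvPairing G 𝓐) (hC : C ∈ 𝓐) {m r : X}
    (f : ConvTo 𝒰 B B' n p) (f' : ConvTo 𝒰 C C' m r) {x : X} (hx : x ∈ B) (hxC : x ∈ C)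
    (hxn : x ≠ n) : p ∈ C' := by
  refine (h.closed C' (f'.image_mem h hC)).mem_of_tendsto (f.tendsto hx hxn) ?_
  filter_upwards [f'.image_eq] with g hg
  exact hg ▸ smul_mem_smul_set hxC

theorem ConvTo.inter_subset (h : IsLocalConvPairing G 𝓐) (hC : C ∈ 𝓐) {m r : X}
    (f : ConvTo 𝒰 B B' n p) (f' : ConvTo 𝒰 C C' m r) (hn : n ∉ C) {x : X} (hx : x ∈ B')
    (hxC : x ∈ C') : x = p := by
  by_contra hxp
  exact hn (f.inv.att_mem_of_inter h (f'.image_mem h hC) f'.inv hx hxC hxp)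

/-- If `C` contains neither the repeller of `B` nor a point carried onto the attractor of `B`,
then the limit `C'` of `C` misses that attractor. -/
theorem ConvTo.att_notMem (h : IsLocalConvPairing G 𝓐) (hC : C ∈ 𝓐) {m r : X}
    (f : ConvTo 𝒰 B B' n p) (f' : ConvTo 𝒰 C C' m r) (hn : n ∉ C)
    (hd : ∀ d, (∀ᶠ g : G in 𝒰, g • d = p) → d ∉ C) : p ∉ C' := by
  intro hp
  obtain ⟨g, hgB, hgC⟩ := (f.image_eq.and f'.image_eq).exists
  have hxB : g⁻¹ • p ∈ B := by
    rw [← mem_smul_set_iff_inv_smul_mem, hgB]; exact f.att_mem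
  have hxC : g⁻¹ • p ∈ C := by rwa [← mem_smul_set_iff_inv_smul_mem, hgC]
  refine hd (g⁻¹ • p) ?_ hxC
  filter_upwards [f.image_eq, f'.image_eq] with k hkB hkC
  exact f.inter_subset h hC f' hn (hkB ▸ smul_mem_smul_set hxB) (hkC ▸ smul_mem_smul_set hxC)

variable [CompactSpace X] [LocallyConnectedSpace X] [ContinuousConstSMul G X]

/-- Along a crossing sequence starting at `B` whose later terms avoid the repeller of `B` and the
point carried onto the attractor `p` of `B` (if there is one), every later term shrinks to `p`. -/
theorem ConvTo.shrinksTo_of_crossing (h : IsLocalConvPairing G 𝓐)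
    (hU : (𝒰 : Filter G) ≤ cofinite) (hB : B ∈ 𝓐) (f : ConvTo 𝒰 B B' n p)
    {c : ℕ → Set X} {m : ℕ} (h0 : c 0 = B) (hc : ∀ i ≤ m, c i ∈ 𝓐)
    (hcross : ∀ i < m, Crosses (c i) (c (i + 1))) (hn : ∀ i, 1 ≤ i → i ≤ m → n ∉ c i)
    (hd : ∀ d, (∀ᶠ g : G in 𝒰, g • d = p) → ∀ i, 1 ≤ i → i ≤ m → d ∉ c i) :
    ∀ i, 1 ≤ i → i ≤ m → ShrinksTo 𝒰 (c i) p := by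
  have step : ∀ i, i < m → (∀ V ∈ 𝓝 p, ∀ᶠ g : G in 𝒰, (g • c (i + 1) ∩ V).Nonempty) →
      ShrinksTo 𝒰 (c (i + 1)) p := by
    intro i hi hm
    have hmem := hc (i + 1) hi
    obtain ⟨q, hq | ⟨C', m', f'⟩⟩ := exists_isAttractor h hU hmem
    · rwa [← hq.eq_of_meets hm]
    · exact absurd (f'.mem_of_meets h hmem hm) (f.att_notMem h hmem f'
        (hn _ (by omega) hi) fun d hdd => hd d hdd _ (by omega) hi)
  intro i hi
  induction i, hi using Nat.le_induction with
  | base =>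
    intro him
    refine step 0 him fun V hV => ?_
    have := hcross 0 him
    rw [h0] at this
    exact f.eventually_meets h hB (hc 1 him) this (hn 1 le_rfl him) hV
  | succ i hi ih =>
    intro him
    exact step i him fun V hV =>
      (ih (by omega)).eventually_meets (hcross i him) hV

/-- `F` is the neighbour of `C` in a crossing sequence from `C` to `B` whose intermediate terms
avoid the repeller of `B` and the point carried onto its attractor `p` (if there is one). -/
theorem ConvTo.exists_crossing_shrinksTo (h : IsLocalConvPairing G 𝓐)
    (hU : (𝒰 : Filter G) ≤ cofinite) (hB : B ∈ 𝓐) (f : ConvTo 𝒰 B B' n p) {D : Set X}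
    (hD : CrossSeqAvoiding 𝓐 C B D) (hn : n ∈ D) (hd : ∀ d, (∀ᶠ g : G in 𝒰, g • d = p) → d ∈ D) :
    ∃ F ∈ 𝓐, Crosses F C ∧ ShrinksTo 𝒰 F p := by
  obtain ⟨m, hm, c, h0, hlast, hmem, hcross, havoid⟩ := hD
  have hdisj : ∀ x ∈ D, ∀ i, 1 ≤ i → i ≤ m → x ∉ c (m + 1 - i) := by
    intro x hx i hi him hxc
    have := havoid (m + 1 - i) (by omega) (by omega)
    exact notMem_empty x (this ▸ ⟨hxc, hx⟩)
  have := f.shrinksTo_of_crossing h hU hB (c := fun i => c (m + 1 - i)) (m := m)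
    (by simpa using hlast) (fun i _ => hmem _ (by omega))
    (fun i hi => by
      have := (hcross (m - i) (by omega)).symm
      rwa [show m + 1 - i = m - i + 1 by omega, show m + 1 - (i + 1) = m - i by omega])
    (hdisj n hn) (fun d hdd => hdisj d (hd d hdd)) m hm le_rfl
  have h1 : m + 1 - m = 1 := by omega
  simp only [h1] at this
  exact ⟨c 1, hmem 1 (by omega), h0 ▸ (hcross 0 (by omega)).symm, this⟩

/-- For `C ∩ B = {c}` the two points avoided by a crossing sequence can be made to include the
repeller of `B` and the point (if any) carried onto its attractor, provided `c` is one of them. -/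
theorem ConvTo.exists_crossing_of_singleton (h : IsLocalConvPairing G 𝓐)
    (hU : (𝒰 : Filter G) ≤ cofinite) (hB : B ∈ 𝓐) (hC : C ∈ 𝓐) (f : ConvTo 𝒰 B B' n p)
    {c : X} (hc : C ∩ B = {c}) (hyp : c = n ∨ ∀ d, (∀ᶠ g : G in 𝒰, g • d = p) → d = c) :
    ∃ F ∈ 𝓐, Crosses F C ∧ ShrinksTo 𝒰 F p := by
  have hconn := (h.connect C hC B hB (by rw [hc]; simp)).1 c hc
  suffices ∃ b ∈ B, b ≠ c ∧ (n = b ∨ n = c) ∧ ∀ d, (∀ᶠ g : G in 𝒰, g • d = p) → d = b ∨ d = c by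
    obtain ⟨b, hb, hbc, hn, hd⟩ := this
    exact f.exists_crossing_shrinksTo h hU hB (hconn b hb hbc) hn hd
  by_cases hcn : c = n
  · subst hcn
    by_cases hex : ∃ d, d ≠ c ∧ ∀ᶠ g : G in 𝒰, g • d = p
    · obtain ⟨d, hdc, hd⟩ := hex
      refine ⟨d, ?_, hdc, Or.inr rfl, fun d' hd' => Or.inl ?_⟩
      · obtain ⟨g, hg, hgB⟩ := (hd.and f.image_eq).exists
        rw [← smul_mem_smul_set_iff (a := g), hg, hgB]
        exact f.att_mem
      · obtain ⟨g, hg, hg'⟩ := (hd.and hd').exists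
        exact smul_left_cancel g (hg'.trans hg.symm)
    · obtain ⟨b, hb, hbc, -⟩ := exists_mem_ne_ne_of_two_lt (h.big B hB) c c
      refine ⟨b, hb, hbc, Or.inr rfl, fun d hd => Or.inr ?_⟩
      by_contra hdc
      exact hex ⟨d, hdc, hd⟩
  · exact ⟨n, f.rep_mem, Ne.symm hcn, Or.inl rfl, fun d hd => Or.inr (hyp.resolve_left hcn d hd)⟩

/-! ### Uniqueness of the attractor -/

theorem ConvTo.eq_of_shrinksTo (h : IsLocalConvPairing G 𝓐)
    (hU : (𝒰 : Filter G) ≤ cofinite) (hB : B ∈ 𝓐) (hC : C ∈ 𝓐) (f : ConvTo 𝒰 B B' n p)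
    (f' : ShrinksTo 𝒰 C q) (hc : Crosses B C) : q = p := by
  by_cases hn : n ∈ C
  · by_cases hx : ∃ x ∈ C ∩ B, x ≠ n
    · obtain ⟨x, hx, hxn⟩ := hx
      exact tendsto_nhds_unique (f'.tendsto hx.1) (f.tendsto hx.2 hxn)
    · have hs : C ∩ B = {n} := by
        refine Subset.antisymm (fun x hxx => ?_) (singleton_subset_iff.2 ⟨hn, f.rep_mem⟩)
        by_contra hxn
        exact hx ⟨x, hxx, hxn⟩
      obtain ⟨F, hF, hFC, hFp⟩ := f.exists_crossing_of_singleton h hU hB hC hs (Or.inl rfl)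
      exact f'.eq_of_meets fun V hV => hFp.eventually_meets hFC hV
  · exact f'.eq_of_meets fun V hV => f.eventually_meets h hB hC hc hn hV

/-- If `C ∩ B` has more than two points, one of them is neither repeller and its limit is both
attractors. Otherwise the crossing sequence provided by the pairing reduces the claim to
`ConvTo.eq_of_shrinksTo`. -/
theorem ConvTo.eq_of_convTo (h : IsLocalConvPairing G 𝓐)
    (hU : (𝒰 : Filter G) ≤ cofinite) (hB : B ∈ 𝓐) (hC : C ∈ 𝓐) {m r : X}
    (f : ConvTo 𝒰 B B' n p) (f' : ConvTo 𝒰 C C' m r) (hc : Crosses B C) : p = r := by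
  -- two members with constant translates can only cross by intersecting
  have hne : (C ∩ B).Nonempty := by
    by_cases hn : n ∈ C
    · exact ⟨n, hn, f.rep_mem⟩
    · have hp := f'.mem_of_meets h hC fun V hV => f.eventually_meets h hB hC hc hn hV
      obtain ⟨g, hgB, hgC⟩ := (f.image_eq.and f'.image_eq).exists
      refine ⟨g⁻¹ • p, ?_, ?_⟩
      · rwa [← mem_smul_set_iff_inv_smul_mem, hgC]
      · rw [← mem_smul_set_iff_inv_smul_mem, hgB]; exact f.att_mem
  by_cases hcard : (C ∩ B).encard ≤ 2
  · have hd : ∀ x ∈ C ∩ B, x ≠ n → ∀ d, (∀ᶠ g : G in 𝒰, g • d = p) → d ∈ C ∩ B := by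
      intro x hx hxn d hd
      have hp := f.att_mem_of_inter h hC f' hx.2 hx.1 hxn
      obtain ⟨g, hg, hgB, hgC⟩ := (hd.and (f.image_eq.and f'.image_eq)).exists
      constructor
      · rwa [← smul_mem_smul_set_iff (a := g), hg, hgC]
      · rw [← smul_mem_smul_set_iff (a := g), hg, hgB]; exact f.att_mem
    suffices ∃ F ∈ 𝓐, Crosses F C ∧ ShrinksTo 𝒰 F p by
      obtain ⟨F, hF, hFC, hFp⟩ := this
      exact f'.eq_of_shrinksTo h hU hC hF hFp hFC.symm
    by_cases hs : ∃ c, C ∩ B = {c}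
    · obtain ⟨c, hs⟩ := hs
      refine f.exists_crossing_of_singleton h hU hB hC hs ?_
      by_cases hcn : c = n
      · exact Or.inl hcn
      · refine Or.inr fun d hdd => ?_
        have := hd c (hs ▸ rfl) hcn d hdd
        rwa [hs] at this
    · have htwo : (C ∩ B).Nontrivial := by
        obtain ⟨x, hx⟩ := hne
        by_contra hnt
        exact hs ⟨x, (not_nontrivial_iff.1 hnt).eq_singleton_of_mem hx⟩
      obtain ⟨x, hx, hxn⟩ := htwo.exists_ne n
      refine f.exists_crossing_shrinksTo h hU hB ((h.connect C hC B hB hcard).2 hs)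
        ⟨?_, f.rep_mem⟩ (hd x hx hxn)
      by_contra hn
      obtain ⟨y, hy, hyx⟩ := htwo.exists_ne x
      obtain ⟨g, hgB, hgC⟩ := (f.image_eq.and f'.image_eq).exists
      have key : ∀ z ∈ C ∩ B, g • z = p := fun z hz => f.inter_subset h hC f' hn
        (hgB ▸ smul_mem_smul_set hz.2) (hgC ▸ smul_mem_smul_set hz.1)
      exact hyx (smul_left_cancel g ((key y hy).trans (key x hx).symm))
  · obtain ⟨x, hx, hxn, hxm⟩ := exists_mem_ne_ne_of_two_lt (not_le.1 hcard) n m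
    exact tendsto_nhds_unique (f.tendsto hx.2 hxn) (f'.tendsto hx.1 hxm)

theorem IsAttractor.eq_of_crosses (h : IsLocalConvPairing G 𝓐)
    (hU : (𝒰 : Filter G) ≤ cofinite) (hB : B ∈ 𝓐) (hC : C ∈ 𝓐)
    (f : IsAttractor 𝒰 B p) (f' : IsAttractor 𝒰 C q) (hc : Crosses B C) : p = q := by
  rcases f with f | ⟨B', n, f⟩ <;> rcases f' with e | ⟨C', m, e⟩
  · exact (e.eq_of_meets fun V hV => f.eventually_meets hc hV).symm
  · exact e.eq_of_shrinksTo h hU hC hB f hc.symm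
  · exact (f.eq_of_shrinksTo h hU hB hC e hc).symm
  · exact f.eq_of_convTo h hU hB hC e hc

/-- All members of `𝓐` have the same attractor along `𝒰`, because `𝓐` is cross-connected. -/
theorem IsAttractor.eq (h : IsLocalConvPairing G 𝓐)
    (hU : (𝒰 : Filter G) ≤ cofinite) (hB : B ∈ 𝓐) (hC : C ∈ 𝓐)
    (f : IsAttractor 𝒰 B p) (f' : IsAttractor 𝒰 C q) : p = q := by
  by_cases hne : (B ∩ C).Nonempty
  · exact f.eq_of_crosses h hU hB hC f' (Or.inl hne)
  · have hemp : B ∩ C = ∅ := not_nonempty_iff_eq_empty.1 hne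
    obtain ⟨m, -, c, h0, hlast, hmem, hcross, -⟩ := (h.connect B hB C hC (by simp [hemp])).2
      (by rintro ⟨c, hc⟩; exact hne (hc ▸ singleton_nonempty c))
    have hall : ∀ i ≤ m + 1, IsAttractor 𝒰 (c i) p := by
      intro i
      induction i with
      | zero => intro _; rwa [h0]
      | succ i ih =>
        intro hi
        obtain ⟨r, hr⟩ := exists_isAttractor h hU (hmem (i + 1) hi)
        have := (ih (by omega)).eq_of_crosses h hU (hmem i (by omega)) (hmem (i + 1) hi) hr
          (hcross i (by omega))
        rwa [this]
    have hend := hall (m + 1) le_rfl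
    rw [hlast] at hend
    -- a set may a priori have two attractors; `C` crosses itself
    exact hend.eq_of_crosses h hU hC hC f' (Or.inl (by
      obtain ⟨x, hx, -⟩ := exists_mem_ne_ne_of_two_lt (h.big C hC) p p
      exact ⟨x, hx, hx⟩))

end Dynamics

/-! ### Convergence on the whole space -/

/-- A point different from `n` has a connected open neighbourhood bounded away from `n`. -/
theorem exists_nhd_away [MetricSpace X] [LocallyConnectedSpace X] {n x : X} (hx : x ≠ n) :
    ∃ V : Set X, IsOpen V ∧ x ∈ V ∧ IsPreconnected V ∧ n ∉ closure V := by
  obtain ⟨U, U', hU, hU', hxU, hnU', hd⟩ := t2_separation hx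
  obtain ⟨V, hVU, hVo, hxV, hVc⟩ :=
    locallyConnectedSpace_iff_subsets_isOpen_isConnected.1 ‹_› x U (hU.mem_nhds hxU)
  refine ⟨V, hVo, hxV, hVc.isPreconnected, fun hn => ?_⟩
  obtain ⟨y, hy, hyV⟩ := mem_closure_iff.1 hn U' hU' hnU'
  exact disjoint_left.1 hd (hVU hyV) hy

/-- In the complement of a non-cut point `n`, any two points lie in a preconnected set
bounded away from `n`. -/
theorem exists_preconnected_away [MetricSpace X] [LocallyConnectedSpace X] {n : X}
    (hcut : IsPreconnected ({n}ᶜ : Set X)) {x z : X} (hx : x ≠ n) (hz : z ≠ n) :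
    ∃ K : Set X, IsPreconnected K ∧ x ∈ K ∧ z ∈ K ∧ n ∉ closure K := by
  refine hcut.induction₂ (fun x z => ∃ K : Set X, IsPreconnected K ∧ x ∈ K ∧ z ∈ K ∧
    n ∉ closure K) ?_ ?_ ?_ hx hz
  · intro a ha
    obtain ⟨V, hVo, haV, hVc, hnV⟩ := exists_nhd_away (n := n) ha
    filter_upwards [mem_nhdsWithin_of_mem_nhds (hVo.mem_nhds haV)] with b hb
    exact ⟨V, hVc, haV, hb, hnV⟩
  · rintro a b c - - - ⟨K, hK, haK, hbK, hnK⟩ ⟨L, hL, hbL, hcL, hnL⟩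
    refine ⟨K ∪ L, hK.union b hbK hbL hL, Or.inl haK, Or.inr hcL, ?_⟩
    rw [closure_union]
    exact fun hn => hn.elim hnK hnL
  · rintro a b - - ⟨K, hK, ha, hb, hn⟩
    exact ⟨K, hK, hb, ha, hn⟩

/-- Convergence on one `A ∈ 𝓐` spreads to `X`. If points `ξ g → x ≠ n` had `g • ξ g → y ≠ p`, then
finitely many members of `𝓐` would separate `y` from `p`, and all of them are pulled back to `n`;
but a connected set away from `n` joins `x` to a point of `A` that is carried to `p`. -/
theorem conv_univ_of_convTo [MetricSpace X] [CompactSpace X] [LocallyConnectedSpace X]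
    [ContinuousConstSMul G X] {𝓐 : Set (Set X)} {𝒰 : Ultrafilter G} {A A' : Set X} {n p : X}
    (hcut : IsPreconnected ({n}ᶜ : Set X)) (h : IsLocalConvPairing G 𝓐)
    (hU : (𝒰 : Filter G) ≤ cofinite) (hA : A ∈ 𝓐) (f : ConvTo 𝒰 A A' n p) {W U : Set X}
    (hW : W ∈ 𝓝 n) (hUp : U ∈ 𝓝 p) : ∀ᶠ g : G in 𝒰, ∀ x ∉ W, g • x ∈ U := by
  by_contra hcon
  have hbad : ∀ᶠ g : G in 𝒰, ∃ x, x ∉ W ∧ g • x ∉ U := by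
    filter_upwards [Ultrafilter.eventually_not.2 hcon] with g hg
    push Not at hg
    exact hg
  have hchoice : ∀ g : G, ∃ x, (∃ x, x ∉ W ∧ g • x ∉ U) → x ∉ W ∧ g • x ∉ U := by
    intro g
    by_cases hg : ∃ x, x ∉ W ∧ g • x ∉ U
    · obtain ⟨x, hx⟩ := hg
      exact ⟨x, fun _ => hx⟩
    · exact ⟨n, fun h => absurd h hg⟩
  choose ξ hξ using hchoice
  have hξW : ∀ᶠ g : G in 𝒰, ξ g ∉ W := hbad.mono fun g hg => (hξ g hg).1
  have hξU : ∀ᶠ g : G in 𝒰, g • ξ g ∉ U := hbad.mono fun g hg => (hξ g hg).2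
  obtain ⟨x, -, hx⟩ := isCompact_univ.ultrafilter_le_nhds (𝒰.map ξ) (by simp)
  obtain ⟨y, -, hy⟩ := isCompact_univ.ultrafilter_le_nhds (𝒰.map fun g => g • ξ g) (by simp)
  have hxn : x ≠ n := by
    rintro rfl
    have h1 : ∀ᶠ g : G in 𝒰, ξ g ∈ W := hx hW
    obtain ⟨g, hg, hg'⟩ := (h1.and hξW).exists
    exact hg' hg
  have hyp : y ≠ p := by
    rintro rfl
    have h1 : ∀ᶠ g : G in 𝒰, g • ξ g ∈ U := hy hUp
    obtain ⟨g, hg, hg'⟩ := (h1.and hξU).exists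
    exact hg' hg
  obtain ⟨𝓑, h𝓑, hfin, hyE, hpE, hsep⟩ := h.fine y p hyp
  have hclosed : IsClosed (⋃₀ 𝓑) := by
    rw [sUnion_eq_biUnion]
    exact hfin.isClosed_biUnion fun B hB => h.closed B (h𝓑 hB)
  have hVU := map_inv_le_cofinite hU
  -- no member of `𝓑` contains the attractor `p`, so all of them are pulled back to `n`
  have hshr : ∀ B ∈ 𝓑, ShrinksTo (𝒰.map (·⁻¹)) B n := by
    intro B hB
    obtain ⟨q, hq⟩ := exists_isAttractor h hVU (h𝓑 hB)
    have hqn : q = n := hq.eq h hVU (h𝓑 hB) (f.image_mem h hA) (Or.inr ⟨A, p, f.inv⟩)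
    rw [hqn] at hq
    rcases hq with hq | ⟨B', r, hq⟩
    · exact hq
    · exfalso
      have hB' := hq.image_mem h (h𝓑 hB)
      have hinv := hq.inv
      rw [map_inv_map_inv] at hinv
      have hrp : r = p :=
        IsAttractor.eq h hU hB' hA (Or.inr ⟨B, n, hinv⟩) (Or.inr ⟨A', n, f⟩)
      exact hpE (mem_sUnion_of_mem (hrp ▸ hq.rep_mem) hB)
  obtain ⟨z, hzA, hzn, -⟩ := exists_mem_ne_ne_of_two_lt (h.big A hA) n n
  obtain ⟨K, hK, hxK, hzK, hnK⟩ := exists_preconnected_away hcut hxn hzn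
  obtain ⟨V, hVo, hxV, hVc, hnV⟩ := exists_nhd_away (n := n) hxn
  have hKV : IsPreconnected (K ∪ V) := hK.union x hxK hxV hVc
  have hnKV : (closure (K ∪ V))ᶜ ∈ 𝓝 n := by
    refine isClosed_closure.isOpen_compl.mem_nhds ?_
    rw [closure_union]
    exact fun hn => hn.elim hnK hnV
  have hpull : ∀ᶠ g : G in 𝒰, ∀ B ∈ 𝓑, g⁻¹ • B ⊆ (closure (K ∪ V))ᶜ := by
    rw [eventually_all_finite hfin]
    intro B hB
    have := hshr B hB _ hnKV
    rwa [Ultrafilter.coe_map, eventually_map] at this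
  have hcomp : ∀ w ∉ ⋃₀ 𝓑, connectedComponentIn (⋃₀ 𝓑)ᶜ w ∈ 𝓝 w := fun w hw =>
    hclosed.isOpen_compl.connectedComponentIn.mem_nhds (mem_connectedComponentIn (F := (⋃₀ 𝓑)ᶜ) hw)
  have hev1 : ∀ᶠ g : G in 𝒰, ξ g ∈ V := hx (hVo.mem_nhds hxV)
  have hev2 : ∀ᶠ g : G in 𝒰, g • ξ g ∈ connectedComponentIn (⋃₀ 𝓑)ᶜ y := hy (hcomp y hyE)
  have hev3 : ∀ᶠ g : G in 𝒰, g • z ∈ connectedComponentIn (⋃₀ 𝓑)ᶜ p :=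
    f.tendsto hzA hzn (hcomp p hpE)
  obtain ⟨g, hg, hg1, hg2, hg3⟩ := (hpull.and (hev1.and (hev2.and hev3))).exists
  -- `g • (K ∪ V)` joins the components of `y` and `p` without meeting `⋃₀ 𝓑`
  have hpre : IsPreconnected (g • (K ∪ V)) := by
    rw [← image_smul]
    exact hKV.image _ (continuous_const_smul g).continuousOn
  have hsub : g • (K ∪ V) ⊆ (⋃₀ 𝓑)ᶜ := by
    rintro w hw ⟨B, hB, hwB⟩
    exact hg B hB (smul_mem_smul_set hwB)
      (subset_closure (mem_smul_set_iff_inv_smul_mem.1 hw))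
  have hjoin := connectedComponentIn_eq (hpre.subset_connectedComponentIn
    (smul_mem_smul_set (Or.inr hg1)) hsub (smul_mem_smul_set (Or.inl hzK)))
  exact hsep ((connectedComponentIn_eq hg2).trans
    (hjoin.trans (connectedComponentIn_eq hg3).symm))

end Helpers

/-- If `(G, 𝓐)` is a local convergence pairing on `X`, then each stabilizer `st(A)`
acts as a convergence group on all of `X`. -/
theorem stabilizer_conv_on_space {G X : Type*} [Group G] [MulAction G X]
    [MetricSpace X] [CompactSpace X] [ConnectedSpace X] [LocallyConnectedSpace X]
    [ContinuousConstSMul G X]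
    (hcut : ∀ x : X, IsPreconnected ({x}ᶜ : Set X))
    (𝓐 : Set (Set X)) (h : IsLocalConvPairing G 𝓐) :
    ∀ A ∈ 𝓐, ConvGroupOn (stab G A) (Set.univ : Set X) := by
  intro A hA g hgA hginj
  have hU : (((hyperfilter ℕ).map g : Ultrafilter G) : Filter G) ≤ cofinite :=
    (map_mono hyperfilter_le_cofinite).trans hginj.tendsto_cofinite
  have hstab : ∀ᶠ k : G in (hyperfilter ℕ).map g, k ∈ stab G A := by
    rw [Ultrafilter.coe_map, eventually_map]
    exact Eventually.of_forall hgA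
  obtain ⟨n, hn, p, hp, hconv⟩ := exists_conv_of_convGroupOn (h.closed A hA).isCompact
    (h.stabConv A hA) _ hU hstab
  have f : ConvTo ((hyperfilter ℕ).map g) A A n p := ⟨hstab, hn, hp, hconv⟩
  have hfreq : ∀ m : ℕ, ∃ᶠ i in atTop, ∀ x ∉ Metric.ball n (1 / ((m : ℝ) + 1)),
      g i • x ∈ Metric.ball p (1 / ((m : ℝ) + 1)) := by
    intro m
    have hm : (0 : ℝ) < 1 / ((m : ℝ) + 1) := Nat.one_div_pos_of_nat
    have := conv_univ_of_convTo (hcut n) h hU hA f (Metric.ball_mem_nhds n hm)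
      (Metric.ball_mem_nhds p hm)
    rw [Ultrafilter.coe_map, eventually_map] at this
    exact this.frequently.filter_mono Nat.hyperfilter_le_atTop
  obtain ⟨k, hk, hkm⟩ := extraction_forall_of_frequently hfreq
  refine ⟨k, hk, n, p, mem_univ n, mem_univ p, fun C _ hC hnC U hUo hpU => ?_⟩
  obtain ⟨δ, hδ, hδC⟩ := Metric.mem_nhds_iff.1 (hC.isClosed.isOpen_compl.mem_nhds hnC)
  obtain ⟨ε, hε, hεU⟩ := Metric.mem_nhds_iff.1 (hUo.mem_nhds hpU)
  have hlim := (tendsto_one_div_add_atTop_nhds_zero_nat (𝕜 := ℝ)).eventually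
    (gt_mem_nhds (lt_min hδ hε))
  filter_upwards [hlim] with m hm
  rintro _ ⟨x, hxC, rfl⟩
  refine hεU (Metric.ball_subset_ball (hm.le.trans (min_le_right _ _)) (hkm m x fun hx => ?_))
  exact hδC (Metric.ball_subset_ball (hm.le.trans (min_le_left _ _)) hx) hxC
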